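/- Let C ≠ 0 be a real constant, let L_M : ℝ → ℝ be differentiable, and let q : ℝ → ℝ be twice differentiable. For the naive Lagrangian L(x, v) = (1/2)·L_M(x)·v² − x²/(2C) (magnetic co-energy minus electric energy), the Euler–Lagrange expression along q, d/dt[∂L/∂v(q(t), q̇(t))] − ∂L/∂x(q(t), q̇(t)), equals L_M(q(t))·q̈(t) + (1/2)·L_M'(q(t))·q̇(t)² + q(t)/C for every t. -/

import Mathlib

/-!
The momentum conjugate to the charge is `L_M(q) q̇`. Its time derivative contains the full term
`L_M'(q) q̇²` by the chain rule, while the dependence of the co-energy `(1/2) L_M(q) q̇²` on `q`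
removes one half of it. The Euler–Lagrange equation therefore carries only half of the coefficient
of `L_M'(q) q̇²` that Kirchhoff's voltage law prescribes, whatever energy the capacitor stores.
-/

section EulerLagrange

variable {𝕜 : Type*} [NontriviallyNormedField 𝕜]

/-- The Euler–Lagrange expression `d/dt[∂L/∂v(q, q̇)] - ∂L/∂x(q, q̇)` of a Lagrangian `L(x, v)`
along a curve `q`, at time `t`. Derivatives are `deriv`, hence `0` where they do not exist. -/
noncomputable def eulerLagrange (L : 𝕜 → 𝕜 → 𝕜) (q : 𝕜 → 𝕜) (t : 𝕜) : 𝕜 :=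
  deriv (fun s => deriv (fun v => L (q s) v) (deriv q s)) t
    - deriv (fun x => L x (deriv q t)) (q t)

/-- The naive Lagrangian of a meminductor loop: magnetic co-energy `(1/2) L_M(x) v²` minus electric
energy `U(x)`. The energy function `U` is arbitrary, so that the capacitor may be nonlinear, with
voltage `U'(x)` at charge `x`. -/
def naiveLagrangian (LM U : 𝕜 → 𝕜) (x v : 𝕜) : 𝕜 :=
  (1 / 2) * LM x * v ^ 2 - U x

theorem deriv_naiveLagrangian_velocity [NeZero (2 : 𝕜)] (LM U : 𝕜 → 𝕜) (x v : 𝕜) :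
    deriv (fun w => naiveLagrangian LM U x w) v = LM x * v := by
  have h : HasDerivAt (fun w => naiveLagrangian LM U x w) ((1 / 2) * LM x * (2 * v)) v := by
    simpa [naiveLagrangian] using (hasDerivAt_pow 2 v).const_mul ((1 / 2) * LM x)
  rw [h.deriv]
  field_simp

theorem deriv_naiveLagrangian_charge {LM U : 𝕜 → 𝕜} {x : 𝕜}
    (hLM : DifferentiableAt 𝕜 LM x) (hU : DifferentiableAt 𝕜 U x) (v : 𝕜) :
    deriv (fun y => naiveLagrangian LM U y v) x = (1 / 2) * deriv LM x * v ^ 2 - deriv U x :=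
  (((hLM.hasDerivAt.const_mul (1 / 2)).mul_const (v ^ 2)).sub hU.hasDerivAt).deriv

theorem deriv_comp_mul_deriv_self {f q : 𝕜 → 𝕜} {t : 𝕜}
    (hf : DifferentiableAt 𝕜 f (q t)) (hq : DifferentiableAt 𝕜 q t)
    (hq' : DifferentiableAt 𝕜 (deriv q) t) :
    deriv (fun s => f (q s) * deriv q s) t
      = deriv f (q t) * deriv q t ^ 2 + f (q t) * deriv (deriv q) t := by
  have hfq : HasDerivAt (fun s => f (q s)) (deriv f (q t) * deriv q t) t :=
    hf.hasDerivAt.comp t hq.hasDerivAt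
  rw [(hfq.fun_mul hq'.hasDerivAt).deriv]
  ring

theorem hasDerivAt_sq_div_two_mul [NeZero (2 : 𝕜)] (C x : 𝕜) :
    HasDerivAt (fun y => y ^ 2 / (2 * C)) (x / C) x := by
  have h : HasDerivAt (fun y => y ^ 2 / (2 * C)) (2 * x / (2 * C)) x := by
    simpa using (hasDerivAt_pow 2 x).div_const (2 * C)
  rwa [mul_div_mul_left x C two_ne_zero] at h

theorem stmt4_general [NeZero (2 : 𝕜)] {LM U q : 𝕜 → 𝕜} {t : 𝕜}
    (hLM : DifferentiableAt 𝕜 LM (q t)) (hU : DifferentiableAt 𝕜 U (q t))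
    (hq : DifferentiableAt 𝕜 q t) (hq' : DifferentiableAt 𝕜 (deriv q) t) :
    eulerLagrange (naiveLagrangian LM U) q t
      = LM (q t) * deriv (deriv q) t
          + (1 / 2) * deriv LM (q t) * deriv q t ^ 2 + deriv U (q t) := by
  simp only [eulerLagrange, deriv_naiveLagrangian_velocity]
  rw [deriv_comp_mul_deriv_self hLM hq hq', deriv_naiveLagrangian_charge hLM hU]
  field_simp
  ring

end EulerLagrange

/-- Series loop of a charge-modulated meminductor `L_M(q)` and a linear
capacitor `C`.  For the naive Lagrangian
`L(x, v) = (1/2) L_M(x) v² - x² / (2C)`, the Euler–Lagrange expression along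
the loop charge `q` equals `L_M(q) q̈ + (1/2) L_M'(q) q̇² + q / C`. -/
theorem stmt4 (C : ℝ) (hC : C ≠ 0) (LM q : ℝ → ℝ)
    (hLM : Differentiable ℝ LM)
    (hq : Differentiable ℝ q) (hq' : Differentiable ℝ (deriv q)) :
    ∀ t : ℝ,
      deriv (fun s =>
          deriv (fun v => (1 / 2) * LM (q s) * v ^ 2 - (q s) ^ 2 / (2 * C))
            (deriv q s)) t
        - deriv (fun x => (1 / 2) * LM x * (deriv q t) ^ 2 - x ^ 2 / (2 * C)) (q t)
      = LM (q t) * deriv (deriv q) t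
          + (1 / 2) * deriv LM (q t) * (deriv q t) ^ 2 + q t / C := by
  intro t
  have hU := hasDerivAt_sq_div_two_mul C (q t)
  rw [← hU.deriv]
  exact stmt4_general (hLM (q t)) hU.differentiableAt (hq t) (hq' t)
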